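/- arXiv:0911.1417 — 2 statements merged into one kernel-verified Lean document; each statement's English description precedes it below -/
import Mathlib

section
/- In the spectral sequence {E_r^{p,q}, d_r} of the filtration K_p = ⊕_{i≥p} Ω^i(M) of (Ω*(M), D): E_3^{p,q} = E_2^{p,q}, and for any class [x_p]_3 ∈ E_3^{p,q} represented by a closed p-form x_p, the third differential is cup product with H_3: d_3[x_p] = [H_3 ∧ x_p]. -/
section TwistedSetup

variable {W : Type} [Ring W] [Algebra ℝ W]

/-- The filtration `K_p = ⊕_{i ≥ p} Ω^i(M)` of the (abstractly modelled) de Rham complex. -/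
def Kfil (A : ℤ → Submodule ℝ W) (p : ℤ) : Submodule ℝ W :=
  ⨆ i : ℤ, ⨆ _ : p ≤ i, A i

/-- The submodule of (sums of) forms of pure parity `m (mod 2)`. -/
def ParPart (A : ℤ → Submodule ℝ W) (m : ℤ) : Submodule ℝ W :=
  ⨆ i : ℤ, ⨆ _ : i % 2 = m % 2, A i

/-- `Z_r^{p,q}`: elements of `K_p` of total parity `p + q` whose differential lies in `K_{p+r}`. -/
def Zcyc (A : ℤ → Submodule ℝ W) (D : W →ₗ[ℝ] W) (r : ℕ) (p q : ℤ) : Submodule ℝ W :=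
  Kfil A p ⊓ ParPart A (p + q) ⊓ (Kfil A (p + r)).comap D

/-- The boundaries `B_r^{p,q} = Z_{r-1}^{p+1,q-1} + D Z_{r-1}^{p-r+1,q+r-2}`. -/
def Bbd (A : ℤ → Submodule ℝ W) (D : W →ₗ[ℝ] W) (r : ℕ) (p q : ℤ) : Submodule ℝ W :=
  Zcyc A D (r - 1) (p + 1) (q - 1) ⊔ (Zcyc A D (r - 1) (p - r + 1) (q + r - 2)).map D

/-- The page `E_r^{p,q}` of the spectral sequence of the filtered complex `(Ω^*(M), D)`. -/
abbrev Epage (A : ℤ → Submodule ℝ W) (D : W →ₗ[ℝ] W) (r : ℕ) (p q : ℤ) : Type :=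
  ↥(Zcyc A D r p q) ⧸ (Bbd A D r p q).comap (Zcyc A D r p q).subtype

/-- The class `[z]_r ∈ E_r^{p,q}` of a cocycle `z ∈ Z_r^{p,q}`. -/
def pageCls (A : ℤ → Submodule ℝ W) (D : W →ₗ[ℝ] W) (r : ℕ) (p q : ℤ)
    (z : W) (hz : z ∈ Zcyc A D r p q) : Epage A D r p q :=
  Submodule.Quotient.mk ⟨z, hz⟩

open Classical in
noncomputable def dpageCore (A : ℤ → Submodule ℝ W) (D : W →ₗ[ℝ] W) (r : ℕ) (p q : ℤ) :
    Epage A D r p q →ₗ[ℝ] Epage A D r (p + r) (q - r + 1) :=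
  if h : (∀ x ∈ Zcyc A D r p q, D x ∈ Zcyc A D r (p + r) (q - r + 1)) ∧
      (∀ x ∈ Zcyc A D r p q, x ∈ Bbd A D r p q → D x ∈ Bbd A D r (p + r) (q - r + 1)) then
    Submodule.liftQ _
      (((Bbd A D r (p + r) (q - r + 1)).comap (Zcyc A D r (p + r) (q - r + 1)).subtype).mkQ.comp
        (LinearMap.codRestrict (Zcyc A D r (p + r) (q - r + 1))
          (D.comp (Zcyc A D r p q).subtype) (fun x => h.1 x x.2)))
      (by
        intro x hx
        simp only [Submodule.mem_comap] at hx
        simp only [LinearMap.mem_ker, LinearMap.comp_apply, Submodule.mkQ_apply,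
          Submodule.Quotient.mk_eq_zero, Submodule.mem_comap, LinearMap.codRestrict_apply,
          Submodule.subtype_apply]
        exact h.2 x x.2 hx)
  else 0

/-- The differential `d_r : E_r^{p,q} → E_r^{p+r,q-r+1}` of the spectral sequence,
induced by `D`. -/
noncomputable def dpage (A : ℤ → Submodule ℝ W) (D : W →ₗ[ℝ] W) (r : ℕ) (p q p' q' : ℤ)
    (hp : p' = p + r) (hq : q' = q - r + 1) :
    Epage A D r p q →ₗ[ℝ] Epage A D r p' q' := by
  subst hp; subst hq; exact dpageCore A D r p q

end TwistedSetup

/-!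
An element of `K_p` whose parity differs from that of `p` already lies in `K_{p+1}`, while
`D = d + H ∧` reverses parity. Hence a row with `q` odd vanishes from the first page on, and in a
row with `q` even the cycles and boundaries of the pages `r + 1` and `r + 2`, `r` odd, coincide; for
`r = 1` this is `E_3 = E_2`. As `H` is odd and closed, `H ∧ H = 0` and `D ∘ D = 0`, so `d_3` is
induced by `D`. If `x` is closed, then `D x = H ∧ x` differs from `H_3 ∧ x` by a cycle in `K_{p+4}`,
and such a cycle is zero in `E_3^{p+3,q-2}`.
-/

theorem decompose_apply_eq_zero_of_mem_iSup {ι R M : Type*} [DecidableEq ι] [Semiring R]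
    [AddCommMonoid M] [Module R M] (ℳ : ι → Submodule R M) [DirectSum.Decomposition ℳ]
    {P : ι → Prop} {x : M} (hx : x ∈ ⨆ i, ⨆ _ : P i, ℳ i) {i : ι} (hi : ¬ P i) :
    DirectSum.decompose ℳ x i = 0 := by
  have hle : ⨆ j, ⨆ _ : P j, ℳ j ≤ LinearMap.ker
      (DirectSum.component R ι (fun j => ℳ j) i ∘ₗ
        (DirectSum.decomposeLinearEquiv ℳ).toLinearMap) :=
    iSup₂_le fun j hj y hy => Subtype.ext <|
      DirectSum.decompose_of_mem_ne ℳ hy (ne_of_mem_of_not_mem (s := {k | P k}) hj hi)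
  exact hle hx

section Filtration

variable {W : Type} [Ring W] [Algebra ℝ W] {A : ℤ → Submodule ℝ W}

theorem mem_Kfil_of_mem {p i : ℤ} (hi : p ≤ i) {x : W} (hx : x ∈ A i) : x ∈ Kfil A p :=
  Submodule.mem_iSup_of_mem i (Submodule.mem_iSup_of_mem hi hx)

theorem mem_ParPart_of_mem {m i : ℤ} (hi : i % 2 = m % 2) {x : W} (hx : x ∈ A i) :
    x ∈ ParPart A m :=
  Submodule.mem_iSup_of_mem i (Submodule.mem_iSup_of_mem hi hx)

theorem Kfil_antitone : Antitone (Kfil A) := fun _ _ hpq =>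
  iSup₂_le fun _ hi _ hx => mem_Kfil_of_mem (hpq.trans hi) hx

theorem ParPart_congr {m m' : ℤ} (h : m % 2 = m' % 2) : ParPart A m = ParPart A m' := by
  simp only [ParPart, h]

theorem mul_mem_Kfil [SetLike.GradedMul A] {p q : ℤ} {x y : W} (hx : x ∈ Kfil A p)
    (hy : y ∈ Kfil A q) : x * y ∈ Kfil A (p + q) := by
  have hle : Kfil A p * Kfil A q ≤ Kfil A (p + q) := by
    simp only [Kfil, Submodule.iSup_mul, Submodule.mul_iSup, iSup_le_iff, Submodule.mul_le]
    exact fun _ hi _ hj _ ha _ hb =>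
      mem_Kfil_of_mem (by lia) (SetLike.GradedMul.mul_mem ha hb)
  exact hle (Submodule.mul_mem_mul hx hy)

theorem mul_mem_ParPart [SetLike.GradedMul A] {m m' : ℤ} {x y : W} (hx : x ∈ ParPart A m)
    (hy : y ∈ ParPart A m') : x * y ∈ ParPart A (m + m') := by
  have hle : ParPart A m * ParPart A m' ≤ ParPart A (m + m') := by
    rw [ParPart, ParPart]
    simp only [Submodule.iSup_mul, Submodule.mul_iSup, iSup_le_iff, Submodule.mul_le]
    exact fun _ hi _ hj _ ha _ hb =>
      mem_ParPart_of_mem (by lia) (SetLike.GradedMul.mul_mem ha hb)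
  exact hle (Submodule.mul_mem_mul hx hy)

theorem mem_Kfil_add_one_of_mem_ParPart [DirectSum.Decomposition A] {p m : ℤ}
    (hpm : p % 2 ≠ m % 2) {x : W} (hK : x ∈ Kfil A p) (hP : x ∈ ParPart A m) :
    x ∈ Kfil A (p + 1) := by
  classical
  rw [← DirectSum.sum_support_decompose A x]
  refine Submodule.sum_mem _ fun i hi => ?_
  have hcomp : DirectSum.decompose A x i ≠ 0 := DFinsupp.mem_support_iff.mp hi
  have hpi : p ≤ i := by
    contrapose! hcomp
    exact decompose_apply_eq_zero_of_mem_iSup A hK hcomp.not_ge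
  have him : i % 2 = m % 2 := by
    contrapose! hcomp
    exact decompose_apply_eq_zero_of_mem_iSup A hP hcomp
  exact mem_Kfil_of_mem (by lia) (DirectSum.decompose A x i).2

/-- Operators exchanging even and odd elements of a `ℤ`-graded algebra, such as `d + H ∧` with `H`
of odd degree. -/
def IsParityReversing (A : ℤ → Submodule ℝ W) (D : W →ₗ[ℝ] W) : Prop :=
  ∀ ⦃m : ℤ⦄ ⦃x : W⦄, x ∈ ParPart A m → D x ∈ ParPart A (m + 1)

theorem IsParityReversing.add {D D' : W →ₗ[ℝ] W} (hD : IsParityReversing A D)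
    (hD' : IsParityReversing A D') : IsParityReversing A (D + D') := fun _ _ hx =>
  Submodule.add_mem _ (hD hx) (hD' hx)

theorem isParityReversing_of_map_mem_add_one {d : W →ₗ[ℝ] W}
    (hd : ∀ i : ℤ, ∀ x ∈ A i, d x ∈ A (i + 1)) : IsParityReversing A d := fun m _ hx => by
  have hle : ParPart A m ≤ (ParPart A (m + 1)).comap d :=
    iSup₂_le fun i hi y hy => mem_ParPart_of_mem (by lia) (hd i y hy)
  exact hle hx

theorem isParityReversing_mulLeft [SetLike.GradedMul A] {H : W} (hH : H ∈ ParPart A 1) :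
    IsParityReversing A (LinearMap.mulLeft ℝ H) := fun m _ hx => by
  rw [add_comm m 1]
  exact mul_mem_ParPart hH hx

end Filtration

section Pages

variable {W : Type} [Ring W] [Algebra ℝ W] {A : ℤ → Submodule ℝ W} {D : W →ₗ[ℝ] W}
  {r : ℕ} {p q : ℤ}

theorem mem_Zcyc {x : W} :
    x ∈ Zcyc A D r p q ↔ x ∈ Kfil A p ∧ x ∈ ParPart A (p + q) ∧ D x ∈ Kfil A (p + r) := by
  simp only [Zcyc, Submodule.mem_inf, Submodule.mem_comap, and_assoc]

theorem Zcyc_succ_inf_Kfil :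
    Zcyc A D (r + 1) p q ⊓ Kfil A (p + 1) = Zcyc A D r (p + 1) (q - 1) := by
  ext x
  rw [Submodule.mem_inf, mem_Zcyc, mem_Zcyc, add_add_sub_cancel, Nat.cast_succ,
    add_right_comm p 1, add_assoc p]
  exact ⟨fun ⟨⟨_, hP, hD⟩, hK⟩ => ⟨hK, hP, hD⟩,
    fun ⟨hK, hP, hD⟩ => ⟨⟨Kfil_antitone (by lia) hK, hP, hD⟩, hK⟩⟩

theorem Zcyc_succ_of_odd [DirectSum.Decomposition A] (hq : Odd q) :
    Zcyc A D (r + 1) p q = Zcyc A D r (p + 1) (q - 1) := by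
  rw [← Zcyc_succ_inf_Kfil, left_eq_inf]
  intro x hx
  obtain ⟨hK, hP, -⟩ := mem_Zcyc.mp hx
  exact mem_Kfil_add_one_of_mem_ParPart (by grind) hK hP

theorem Zcyc_succ_of_even_add [DirectSum.Decomposition A] (hD : IsParityReversing A D)
    (hrq : Even (r + q)) : Zcyc A D (r + 1) p q = Zcyc A D r p q := by
  ext x
  simp only [mem_Zcyc, Nat.cast_succ, ← add_assoc, and_congr_right_iff]
  exact fun _ hP => ⟨fun h => Kfil_antitone (by lia) h,
    fun h => mem_Kfil_add_one_of_mem_ParPart (by grind) h (hD hP)⟩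

theorem Bbd_succ : Bbd A D (r + 1) p q =
    Zcyc A D r (p + 1) (q - 1) ⊔ (Zcyc A D r (p - r) (q + r - 1)).map D := by
  have hp : p - (r + 1 : ℕ) + 1 = p - r := by lia
  have hq : q + (r + 1 : ℕ) - 2 = q + r - 1 := by lia
  rw [Bbd, hp, hq, Nat.add_sub_cancel]

theorem Bbd_add_two_of_odd [DirectSum.Decomposition A] (hD : IsParityReversing A D) (hr : Odd r)
    (hq : Even q) : Bbd A D (r + 2) p q = Bbd A D (r + 1) p q := by
  have hp' : p - (r + 1 : ℕ) + 1 = p - r := by lia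
  have hq' : q + (r + 1 : ℕ) - 1 - 1 = q + r - 1 := by lia
  rw [Bbd_succ, Bbd_succ, Zcyc_succ_of_even_add hD (by grind), Zcyc_succ_of_odd (by grind), hp',
    hq']

theorem subsingleton_Epage_succ_of_odd [DirectSum.Decomposition A] (hq : Odd q) :
    Subsingleton (Epage A D (r + 1) p q) := by
  rw [Submodule.Quotient.subsingleton_iff, Submodule.comap_subtype_eq_top, Bbd_succ,
    Zcyc_succ_of_odd hq]
  exact le_sup_left

theorem nonempty_Epage_add_two_equiv [DirectSum.Decomposition A] (hD : IsParityReversing A D)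
    (hr : Odd r) (p q : ℤ) :
    Nonempty (Epage A D (r + 2) p q ≃ₗ[ℝ] Epage A D (r + 1) p q) := by
  rcases Int.even_or_odd q with hq | hq
  · unfold Epage
    rw [Bbd_add_two_of_odd hD hr hq, Zcyc_succ_of_even_add hD (by grind)]
    exact ⟨LinearEquiv.refl ℝ _⟩
  · have := subsingleton_Epage_succ_of_odd (A := A) (D := D) (r := r) (p := p) hq
    have := subsingleton_Epage_succ_of_odd (A := A) (D := D) (r := r + 1) (p := p) hq
    exact ⟨LinearEquiv.ofSubsingleton _ _⟩

theorem map_mem_Zcyc (hD : IsParityReversing A D) (hDD : ∀ x, D (D x) = 0) {x : W}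
    (hx : x ∈ Zcyc A D r p q) : D x ∈ Zcyc A D r (p + r) (q - r + 1) := by
  obtain ⟨-, hP, hK⟩ := mem_Zcyc.mp hx
  refine mem_Zcyc.mpr ⟨hK, ?_, by simp only [hDD, zero_mem]⟩
  rw [ParPart_congr (m' := p + q + 1) (by lia)]
  exact hD hP

theorem map_mem_Bbd (hDD : ∀ x, D (D x) = 0) {x : W} (hx : x ∈ Bbd A D r p q) :
    D x ∈ Bbd A D r (p + r) (q - r + 1) := by
  obtain ⟨y, hy, _, ⟨w, -, rfl⟩, rfl⟩ := Submodule.mem_sup.mp hx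
  have hp : p + r - r + 1 = p + 1 := by ring
  have hq : q - r + 1 + r - 2 = q - 1 := by ring
  rw [map_add, hDD, add_zero, Bbd, hp, hq]
  exact Submodule.mem_sup_right (Submodule.mem_map_of_mem hy)

theorem dpage_pageCls (hD : IsParityReversing A D) (hDD : ∀ x, D (D x) = 0) {p' q' : ℤ}
    (hp : p' = p + r) (hq : q' = q - r + 1) {x : W} (hx : x ∈ Zcyc A D r p q)
    (hDx : D x ∈ Zcyc A D r p' q') :
    dpage A D r p q p' q' hp hq (pageCls A D r p q x hx) = pageCls A D r p' q' (D x) hDx := by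
  subst hp hq
  simp only [dpage, dpageCore]
  rw [dif_pos ⟨fun _ => map_mem_Zcyc hD hDD, fun _ _ => map_mem_Bbd hDD⟩]
  rfl

theorem pageCls_succ_eq_of_sub_mem_Kfil {x y : W} (hx : x ∈ Zcyc A D (r + 1) p q)
    (hy : y ∈ Zcyc A D (r + 1) p q) (hxy : x - y ∈ Kfil A (p + 1)) :
    pageCls A D (r + 1) p q x hx = pageCls A D (r + 1) p q y hy := by
  have hmem : x - y ∈ Zcyc A D r (p + 1) (q - 1) := by
    rw [← Zcyc_succ_inf_Kfil]
    exact ⟨Submodule.sub_mem _ hx hy, hxy⟩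
  refine (Submodule.Quotient.eq _).mpr ?_
  rw [Submodule.mem_comap, Bbd_succ]
  exact Submodule.mem_sup_left hmem

end Pages

section TwistedDifferential

variable {W : Type} [Ring W] [Algebra ℝ W] {A : ℤ → Submodule ℝ W} {d : W →ₗ[ℝ] W}

/-- The twisted differential `d + H ∧`; the wedge product is the multiplication of `W`. -/
def twistedDifferential (d : W →ₗ[ℝ] W) (H : W) : W →ₗ[ℝ] W :=
  d + LinearMap.mulLeft ℝ H

theorem twistedDifferential_apply (H w : W) : twistedDifferential d H w = d w + H * w := rfl

theorem mul_eq_neg_mul_of_mem_ParPart_one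
    (hgcomm : ∀ (i j : ℤ) (x y : W), x ∈ A i → y ∈ A j → x * y = ((-1 : ℝ) ^ (i * j)) • (y * x))
    {x y : W} (hx : x ∈ ParPart A 1) (hy : y ∈ ParPart A 1) : x * y = -(y * x) := by
  have homogeneous_left : ∀ i : ℤ, i % 2 = 1 → ∀ a ∈ A i,
      ParPart A 1 ≤ LinearMap.ker (LinearMap.mulLeft ℝ a + LinearMap.mulRight ℝ a) :=
    fun i hi a ha => iSup₂_le fun j hj b hb => by
      have hij : Odd (i * j) := (Int.odd_iff.mpr hi).mul (Int.odd_iff.mpr hj)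
      simp [hgcomm i j a b ha hb, hij.neg_one_zpow]
  have hle : ParPart A 1 ≤ LinearMap.ker (LinearMap.mulRight ℝ y + LinearMap.mulLeft ℝ y) :=
    iSup₂_le fun i hi a ha => by
      simpa [add_comm] using homogeneous_left i hi a ha hy
  exact eq_neg_of_add_eq_zero_left (hle hx)

theorem mul_self_eq_zero_of_mem_ParPart_one
    (hgcomm : ∀ (i j : ℤ) (x y : W), x ∈ A i → y ∈ A j → x * y = ((-1 : ℝ) ^ (i * j)) • (y * x))
    {x : W} (hx : x ∈ ParPart A 1) : x * x = 0 :=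
  have := IsAddTorsionFree.of_isTorsionFree ℝ W
  self_eq_neg.mp (mul_eq_neg_mul_of_mem_ParPart_one hgcomm hx hx)

theorem map_mul_of_mem_ParPart_one
    (hleib : ∀ (i : ℤ) (x y : W), x ∈ A i → d (x * y) = d x * y + ((-1 : ℝ) ^ i) • (x * d y))
    {x : W} (hx : x ∈ ParPart A 1) (y : W) : d (x * y) = d x * y - x * d y := by
  have hle : ParPart A 1 ≤ LinearMap.eqLocus (d ∘ₗ LinearMap.mulRight ℝ y)
      (LinearMap.mulRight ℝ y ∘ₗ d - LinearMap.mulRight ℝ (d y)) :=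
    iSup₂_le fun i hi a ha => by
      have hodd : Odd i := Int.odd_iff.mpr hi
      simp [hleib i a y ha, hodd.neg_one_zpow, sub_eq_add_neg]
  exact hle hx

theorem twistedDifferential_twistedDifferential
    (hgcomm : ∀ (i j : ℤ) (x y : W), x ∈ A i → y ∈ A j → x * y = ((-1 : ℝ) ^ (i * j)) • (y * x))
    (hleib : ∀ (i : ℤ) (x y : W), x ∈ A i → d (x * y) = d x * y + ((-1 : ℝ) ^ i) • (x * d y))
    (hd2 : ∀ x, d (d x) = 0) {H : W} (hH : H ∈ ParPart A 1) (hdH : d H = 0) (w : W) :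
    twistedDifferential d H (twistedDifferential d H w) = 0 := by
  have hHH : H * H = 0 := mul_self_eq_zero_of_mem_ParPart_one hgcomm hH
  calc d (d w + H * w) + H * (d w + H * w)
      = d (d w) + d H * w + H * H * w := by
        rw [map_add, map_mul_of_mem_ParPart_one hleib hH]; noncomm_ring
    _ = 0 := by rw [hd2, hdH, hHH]; simp

theorem isParityReversing_twistedDifferential [SetLike.GradedMul A]
    (hd : ∀ i : ℤ, ∀ x ∈ A i, d x ∈ A (i + 1)) {H : W} (hH : H ∈ ParPart A 1) :
    IsParityReversing A (twistedDifferential d H) :=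
  (isParityReversing_of_map_mem_add_one hd).add (isParityReversing_mulLeft hH)

theorem dpage_twistedDifferential_pageCls [SetLike.GradedMul A] {H η : W}
    (hD : IsParityReversing A (twistedDifferential d H))
    (hDD : ∀ w, twistedDifferential d H (twistedDifferential d H w) = 0)
    {r : ℕ} (hη : H - η ∈ Kfil A (r + 2)) {p q p' q' : ℤ} (hp : p' = p + (r + 1 : ℕ))
    (hq : q' = q - (r + 1 : ℕ) + 1) {x : W} (hdx : d x = 0)
    (hx : x ∈ Zcyc A (twistedDifferential d H) (r + 1) p q)
    (hηx : η * x ∈ Zcyc A (twistedDifferential d H) (r + 1) p' q') :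
    dpage A (twistedDifferential d H) (r + 1) p q p' q' hp hq
        (pageCls A (twistedDifferential d H) (r + 1) p q x hx)
      = pageCls A (twistedDifferential d H) (r + 1) p' q' (η * x) hηx := by
  have hDx : twistedDifferential d H x ∈ Zcyc A (twistedDifferential d H) (r + 1) p' q' := by
    subst hp hq
    exact map_mem_Zcyc hD hDD hx
  have hsub : twistedDifferential d H x - η * x = (H - η) * x := by
    rw [twistedDifferential_apply, hdx, zero_add, sub_mul]
  have hK : (H - η) * x ∈ Kfil A (p' + 1) := by
    have hdeg : p' + 1 = r + 2 + p := by lia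
    rw [hdeg]
    exact mul_mem_Kfil hη (mem_Zcyc.mp hx).1
  rw [dpage_pageCls hD hDD hp hq hx hDx]
  exact pageCls_succ_eq_of_sub_mem_Kfil hDx hηx (hsub ▸ hK)

theorem sum_Icc_one_sub_mem_Kfil {Hc : ℕ → W} (hHc : ∀ i : ℕ, Hc i ∈ A (2 * (i : ℤ) + 1)) {m : ℕ}
    (hm : m = 0 → Hc 1 = 0) : ∑ i ∈ Finset.Icc 1 m, Hc i - Hc 1 ∈ Kfil A 4 := by
  rcases Nat.eq_zero_or_pos m with rfl | hpos
  · simp [hm rfl]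
  · rw [← Finset.add_sum_Ioc_eq_sum_Icc hpos, add_sub_cancel_left]
    refine Submodule.sum_mem _ fun i hi => mem_Kfil_of_mem ?_ (hHc i)
    have hone : 1 < i := (Finset.mem_Ioc.mp hi).1
    lia

theorem E3_page_and_third_differential_general [DirectSum.Decomposition A] [SetLike.GradedMul A]
    (hdmem : ∀ i : ℤ, ∀ x ∈ A i, d x ∈ A (i + 1)) (hd2 : ∀ x, d (d x) = 0)
    (hleib : ∀ (i : ℤ) (x y : W), x ∈ A i → d (x * y) = d x * y + ((-1 : ℝ) ^ i) • (x * d y))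
    (hgcomm : ∀ (i j : ℤ) (x y : W), x ∈ A i → y ∈ A j → x * y = ((-1 : ℝ) ^ (i * j)) • (y * x))
    {H η : W} (hH : H ∈ ParPart A 1) (hdH : d H = 0) (hη : H - η ∈ Kfil A 4) (p q : ℤ) :
    Nonempty (Epage A (twistedDifferential d H) 3 p q ≃ₗ[ℝ]
        Epage A (twistedDifferential d H) 2 p q) ∧
      ∀ x : W, d x = 0 → ∀ (hx : x ∈ Zcyc A (twistedDifferential d H) 3 p q)
        (hηx : η * x ∈ Zcyc A (twistedDifferential d H) 3 (p + 3) (q - 2)),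
        dpage A (twistedDifferential d H) 3 p q (p + 3) (q - 2) (by lia) (by lia)
            (pageCls A (twistedDifferential d H) 3 p q x hx)
          = pageCls A (twistedDifferential d H) 3 (p + 3) (q - 2) (η * x) hηx := by
  have hpar := isParityReversing_twistedDifferential hdmem hH
  have hDD := twistedDifferential_twistedDifferential hgcomm hleib hd2 hH hdH
  exact ⟨nonempty_Epage_add_two_equiv hpar odd_one p q, fun _ hdx =>
    dpage_twistedDifferential_pageCls (r := 2) hpar hDD hη _ _ hdx⟩

end TwistedDifferential

/-- In the spectral sequence of the filtration `K_p = ⊕_{i ≥ p} Ω^i(M)` of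
`(Ω^*(M), D)`: `E_3^{p,q} = E_2^{p,q}`, and for any class `[x_p]_3 ∈ E_3^{p,q}` represented by
a closed `p`-form `x_p`, the third differential is cup product with `H_3`:
`d_3 [x_p] = [H_3 ∧ x_p]`. -/
theorem E3_page_and_third_differential {W : Type} [Ring W] [Algebra ℝ W]
    (n : ℕ) (A : ℤ → Submodule ℝ W) [DirectSum.Decomposition A]
    (hbound : ∀ i : ℤ, i < 0 ∨ (n : ℤ) < i → A i = ⊥)
    (hmul : ∀ (i j : ℤ) (x y : W), x ∈ A i → y ∈ A j → x * y ∈ A (i + j))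
    (d : W →ₗ[ℝ] W)
    (hdmem : ∀ i : ℤ, ∀ x ∈ A i, d x ∈ A (i + 1))
    (hd2 : ∀ x : W, d (d x) = 0)
    (hleib : ∀ (i : ℤ) (x y : W), x ∈ A i →
      d (x * y) = d x * y + ((-1 : ℝ) ^ i) • (x * d y))
    (hgcomm : ∀ (i j : ℤ) (x y : W), x ∈ A i → y ∈ A j →
      x * y = ((-1 : ℝ) ^ (i * j)) • (y * x))
    (Hc : ℕ → W)
    (hHmem : ∀ i : ℕ, Hc i ∈ A (2 * (i : ℤ) + 1))
    (hHcl : ∀ i : ℕ, d (Hc i) = 0)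
    (H : W) (hHdef : H = ∑ i ∈ Finset.Icc 1 ((n - 1) / 2), Hc i)
    (D : W →ₗ[ℝ] W) (hD : ∀ w : W, D w = d w + H * w)
    :
    ∀ p q : ℤ,
      Nonempty (Epage A D 3 p q ≃ₗ[ℝ] Epage A D 2 p q) ∧
      ∀ (x : W), x ∈ A p → d x = 0 →
        ∀ (hx : x ∈ Zcyc A D 3 p q) (hy : Hc 1 * x ∈ Zcyc A D 3 (p + 3) (q - 2)),
          dpage A D 3 p q (p + 3) (q - 2) (by push_cast; ring) (by push_cast; ring)
              (pageCls A D 3 p q x hx)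
            = pageCls A D 3 (p + 3) (q - 2) (Hc 1 * x) hy := by
  have : SetLike.GradedMul A := ⟨fun i j x y => hmul i j x y⟩
  have hH : H ∈ ParPart A 1 :=
    hHdef ▸ Submodule.sum_mem _ fun i _ => mem_ParPart_of_mem (by lia) (hHmem i)
  have hdH : d H = 0 := by simp only [hHdef, map_sum, hHcl, Finset.sum_const_zero]
  have hH3 : (n - 1) / 2 = 0 → Hc 1 = 0 := fun hn => by
    simpa [hbound 3 (Or.inr (by lia))] using hHmem 1
  have hlead : H - Hc 1 ∈ Kfil A 4 := hHdef ▸ sum_Icc_one_sub_mem_Kfil hHmem hH3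
  obtain rfl : D = twistedDifferential d H := LinearMap.ext hD
  exact fun p q => (E3_page_and_third_differential_general hdmem hd2 hleib hgcomm hH hdH hlead
    p q).imp_right fun h x _ => h x
end

section
/- Let H = H_{2s+1} only (s ≥ 1, all other H_{2i+1} = 0) and let [x_p]_{2t+3} ∈ E_{2t+3}^{p,q} with t ≥ 1. Then there exist forms x_{p+2is} = x_{p+2is}^{([t/s])} for 1 ≤ i ≤ [t/s], with x_{p+2(i−1)s+2j} = 0 for 1 ≤ j ≤ s−1 and x_{p+2[t/s]s+2k} = 0 for 1 ≤ k ≤ t−[t/s]s, such that the homogeneous components y_{p+2u+1} of Dx vanish for 0 ≤ u ≤ t, and d_{2t+3}[x_p]_{2t+3} equals [H_{2s+1} ∧ x_p]_{2s+1} if t = s−1, equals [H_{2s+1} ∧ x_{p+2(l−1)s}^{(l−1)}]_{2t+3} if t = ls−1 with l ≥ 2, and equals 0 otherwise. -/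
section GradedModule

variable {ι R M : Type*} [Semiring R] [AddCommMonoid M] [Module R M] {A : ι → Submodule R M}

lemma map_mem_biSup_of_degree [Add ι] {P Q : ι → Prop} {f : M →ₗ[R] M} {k : ι}
    (hf : ∀ i, ∀ w ∈ A i, f w ∈ A (i + k)) (hPQ : ∀ i, P i → Q (i + k)) {w : M}
    (hw : w ∈ ⨆ i, ⨆ _ : P i, A i) : f w ∈ ⨆ i, ⨆ _ : Q i, A i := by
  have hle : ⨆ i, ⨆ _ : P i, A i ≤ (⨆ i, ⨆ _ : Q i, A i).comap f :=
    iSup₂_le fun i hi v hv =>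
      Submodule.mem_iSup_of_mem (i + k) (Submodule.mem_iSup_of_mem (hPQ i hi) (hf i v hv))
  exact hle hw

variable [DecidableEq ι] [DirectSum.Decomposition A]

lemma decompose_eq_zero_of_mem_biSup {P : ι → Prop} {j : ι} (hj : ¬ P j) {w : M}
    (hw : w ∈ ⨆ i, ⨆ _ : P i, A i) : (DirectSum.decompose A w j : M) = 0 := by
  have hle : ⨆ i, ⨆ _ : P i, A i ≤
      LinearMap.ker (DirectSum.component R ι (fun i => A i) j ∘ₗ
        (DirectSum.decomposeLinearEquiv A).toLinearMap) :=
    iSup₂_le fun i hi v hv => LinearMap.mem_ker.2 <| Subtype.ext <|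
      DirectSum.decompose_of_mem_ne A hv fun hij => hj (hij ▸ hi)
  exact congrArg Subtype.val (LinearMap.mem_ker.1 (hle hw))

lemma decompose_map_of_degree [Add ι] [IsRightCancelAdd ι] {f : M →ₗ[R] M} {k : ι}
    (hf : ∀ i, ∀ w ∈ A i, f w ∈ A (i + k)) (w : M) (i : ι) :
    (DirectSum.decompose A (f w) (i + k) : M) = f (DirectSum.decompose A w i) := by
  induction w using DirectSum.Decomposition.inductionOn A with
  | zero => simp
  | @homogeneous j m =>
    by_cases hji : j = i
    · subst hji
      rw [DirectSum.decompose_of_mem_same A m.2, DirectSum.decompose_of_mem_same A (hf j m m.2)]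
    · rw [DirectSum.decompose_of_mem_ne A m.2 hji, map_zero,
        DirectSum.decompose_of_mem_ne A (hf j m m.2) fun h => hji (add_right_cancel h)]
  | add a b ha hb => simp [DirectSum.decompose_add, ha, hb]

end GradedModule

section SpectralSequence

variable {W : Type} [Ring W] [Algebra ℝ W] {A : ℤ → Submodule ℝ W}

lemma mem_kfil_of_mem {p i : ℤ} (hpi : p ≤ i) {w : W} (hw : w ∈ A i) : w ∈ Kfil A p :=
  Submodule.mem_iSup_of_mem i (Submodule.mem_iSup_of_mem hpi hw)

lemma mem_parPart_of_mem {m i : ℤ} (him : i % 2 = m % 2) {w : W} (hw : w ∈ A i) :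
    w ∈ ParPart A m :=
  Submodule.mem_iSup_of_mem i (Submodule.mem_iSup_of_mem him hw)

lemma decompose_eq_zero_of_mem_kfil [DirectSum.Decomposition A] {p i : ℤ} (hip : i < p) {w : W}
    (hw : w ∈ Kfil A p) : (DirectSum.decompose A w i : W) = 0 :=
  decompose_eq_zero_of_mem_biSup (P := fun i => p ≤ i) hip.not_ge hw

lemma decompose_eq_of_sub_mem_kfil [DirectSum.Decomposition A] {p : ℤ} {x z : W} (hx : x ∈ A p)
    (hzx : z - x ∈ Kfil A (p + 1)) : (DirectSum.decompose A z p : W) = x := by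
  have h := decompose_eq_zero_of_mem_kfil (lt_add_one p) hzx
  rw [DirectSum.decompose_sub, DirectSum.sub_apply, AddSubgroupClass.coe_sub,
    DirectSum.decompose_of_mem_same A hx] at h
  exact sub_eq_zero.1 h

lemma map_mem_parPart_of_odd {f : W →ₗ[ℝ] W} {k : ℤ} (hk : Odd k)
    (hf : ∀ i, ∀ w ∈ A i, f w ∈ A (i + k)) {m : ℤ} {w : W} (hw : w ∈ ParPart A m) :
    f w ∈ ParPart A (m + 1) := by
  obtain ⟨l, rfl⟩ := hk
  exact map_mem_biSup_of_degree hf (fun i (hi : i % 2 = m % 2) => by omega) hw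

variable {D : W →ₗ[ℝ] W} {r : ℕ} {p q p' q' : ℤ}

lemma map_mem_zcyc_of_mem_kfil (hD2 : ∀ w, D (D w) = 0)
    (hpar : ∀ m, ∀ w ∈ ParPart A m, D w ∈ ParPart A (m + 1)) {z : W}
    (hz : z ∈ ParPart A (p + q)) (hDz : D z ∈ Kfil A p') (hpq : p' + q' = p + q + 1) :
    D z ∈ Zcyc A D r p' q' :=
  ⟨⟨hDz, hpq ▸ hpar _ z hz⟩, by simp [hD2]⟩

lemma map_mem_zcyc (hD2 : ∀ w, D (D w) = 0)
    (hpar : ∀ m, ∀ w ∈ ParPart A m, D w ∈ ParPart A (m + 1)) {z : W}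
    (hz : z ∈ Zcyc A D r p q) : D z ∈ Zcyc A D r (p + r) (q - r + 1) :=
  map_mem_zcyc_of_mem_kfil hD2 hpar hz.1.2 hz.2 (by ring)

lemma map_mem_bbd (hD2 : ∀ w, D (D w) = 0) {z : W} (hz : z ∈ Bbd A D r p q) :
    D z ∈ Bbd A D r (p + r) (q - r + 1) := by
  obtain ⟨a, ha, _, ⟨c, -, rfl⟩, rfl⟩ := Submodule.mem_sup.1 hz
  rw [map_add, hD2, add_zero]
  refine Submodule.mem_sup_right ⟨a, ?_, rfl⟩
  rwa [show p + (r : ℤ) - r + 1 = p + 1 by ring, show q - (r : ℤ) + 1 + r - 2 = q - 1 by ring]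

lemma exists_dpage_pageCls_eq (hD2 : ∀ w, D (D w) = 0)
    (hpar : ∀ m, ∀ w ∈ ParPart A m, D w ∈ ParPart A (m + 1)) (hp : p' = p + r)
    (hq : q' = q - r + 1) {z w : W} (hz : z ∈ Zcyc A D r p q) (hw : D z = w) :
    ∃ hw : w ∈ Zcyc A D r p' q',
      dpage A D r p q p' q' hp hq (pageCls A D r p q z hz) = pageCls A D r p' q' w hw := by
  subst hp hq hw
  refine ⟨map_mem_zcyc hD2 hpar hz, ?_⟩
  change dpageCore A D r p q _ = _
  rw [dpageCore, dif_pos ⟨fun _ hx => map_mem_zcyc hD2 hpar hx, fun _ _ hx => map_mem_bbd hD2 hx⟩]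
  rfl

lemma dpage_pageCls_eq_zero (hD2 : ∀ w, D (D w) = 0)
    (hpar : ∀ m, ∀ w ∈ ParPart A m, D w ∈ ParPart A (m + 1)) (hp : p' = p + r)
    (hq : q' = q - r + 1) {z : W} (hz : z ∈ Zcyc A D r p q) (hDz : D z ∈ Kfil A (p' + 1)) :
    dpage A D r p q p' q' hp hq (pageCls A D r p q z hz) = 0 := by
  obtain ⟨_, hcls⟩ := exists_dpage_pageCls_eq hD2 hpar hp hq hz rfl
  have hbd : D z ∈ Bbd A D r p' q' := Submodule.mem_sup_left <|
    map_mem_zcyc_of_mem_kfil hD2 hpar hz.1.2 hDz (by rw [hp, hq]; ring)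
  exact hcls.trans ((Submodule.Quotient.mk_eq_zero _).2 hbd)

end SpectralSequence

section Zigzag

variable {R M : Type*} [Semiring R] [AddCommGroup M] [Module R M]

/-- The component `y_{p+2j+1}` of `(d + h) (∑ i, x_{p+2i})`, where `h` raises degrees by `2 s + 1`
and `xs i` stands for `x_{p+2i}`; the term `h x_{p+2(j-s)}` is absent when `j < s`. -/
def totalComponent (d h : M →ₗ[R] M) (s : ℕ) (xs : ℕ → M) (j : ℕ) : M :=
  d (xs j) + if s ≤ j then h (xs (j - s)) else 0

variable {d h : M →ₗ[R] M} {s : ℕ} {xs : ℕ → M}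

lemma totalComponent_of_le {j : ℕ} (hj : s ≤ j) :
    totalComponent d h s xs j = d (xs j) + h (xs (j - s)) := by
  rw [totalComponent, if_pos hj]

lemma totalComponent_of_lt {j : ℕ} (hj : j < s) : totalComponent d h s xs j = d (xs j) := by
  rw [totalComponent, if_neg hj.not_ge, add_zero]

lemma add_apply_sum_range_eq_sum_Ico {m : ℕ} (hy : ∀ j < m, totalComponent d h s xs j = 0) :
    (d + h) (∑ i ∈ Finset.range m, xs i) = ∑ i ∈ Finset.Ico (m - s) m, h (xs i) := by
  induction m with
  | zero => simp
  | succ m ih =>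
    have hm := hy m m.lt_succ_self
    rw [Finset.sum_range_succ, map_add, ih fun j hj => hy j (hj.trans m.lt_succ_self),
      LinearMap.add_apply]
    rcases lt_or_ge m s with hms | hsm
    · rw [totalComponent_of_lt hms] at hm
      rw [hm, zero_add, Nat.sub_eq_zero_of_le hms.le, Nat.sub_eq_zero_of_le hms,
        Finset.sum_Ico_succ_top m.zero_le]
    · rw [totalComponent_of_le hsm] at hm
      rcases s.eq_zero_or_pos with rfl | hs
      · simpa using hm
      · rw [Finset.sum_eq_sum_Ico_succ_bot (show m - s < m by omega),
          show m + 1 - s = m - s + 1 by omega,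
          Finset.sum_Ico_succ_top (show m - s + 1 ≤ m by omega), eq_neg_of_add_eq_zero_left hm]
        abel

lemma sum_Ico_mul_eq_of_forall_not_dvd {N : Type*} [AddCommMonoid N] {f : ℕ → N} (hs : 0 < s)
    (hf : ∀ i, ¬ s ∣ i → f i = 0) (k : ℕ) :
    ∑ i ∈ Finset.Ico (k * s) ((k + 1) * s), f i = f (k * s) := by
  refine Finset.sum_eq_single_of_mem _ (by simp [add_mul, hs]) fun b hb hbk => hf b ?_
  rintro ⟨c, rfl⟩
  rw [Finset.mem_Ico, mul_comm s c] at hb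
  have hkc : k ≤ c := Nat.le_of_mul_le_mul_right hb.1 hs
  have hck : c < k + 1 := Nat.lt_of_mul_lt_mul_right hb.2
  exact hbk (by rw [show c = k by omega, mul_comm])

lemma add_apply_sum_range_eq_of_eq_mul {t l : ℕ}
    (hy : ∀ j < t + 1, totalComponent d h s xs j = 0) (hxs : ∀ i, ¬ s ∣ i → xs i = 0)
    (htl : t + 1 = l * s) :
    (d + h) (∑ i ∈ Finset.range (t + 1), xs i) = h (xs ((l - 1) * s)) := by
  obtain ⟨k, rfl⟩ : ∃ k, l = k + 1 := Nat.exists_eq_succ_of_ne_zero (by rintro rfl; omega)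
  have hs : 0 < s := Nat.pos_of_ne_zero (by rintro rfl; omega)
  rw [add_apply_sum_range_eq_sum_Ico hy, htl, Nat.add_sub_cancel,
    show (k + 1) * s - s = k * s by rw [add_mul, one_mul, Nat.add_sub_cancel]]
  exact sum_Ico_mul_eq_of_forall_not_dvd hs (fun i hi => by rw [hxs i hi, map_zero]) k

end Zigzag

section Strand

variable {R M : Type*} [Semiring R] [AddCommMonoid M] [Module R M] {A : ℤ → Submodule R M}
  [DirectSum.Decomposition A] {s : ℕ}

lemma decompose_add_apply {d h : M →ₗ[R] M} (hd : ∀ i, ∀ w ∈ A i, d w ∈ A (i + 1))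
    (hh : ∀ i, ∀ w ∈ A i, h w ∈ A (i + (2 * (s : ℤ) + 1))) (z : M) (i : ℤ) :
    (DirectSum.decompose A ((d + h) z) (i + 1) : M) =
      d (DirectSum.decompose A z i) + h (DirectSum.decompose A z (i - 2 * s)) := by
  rw [LinearMap.add_apply, DirectSum.decompose_add, DirectSum.add_apply, Submodule.coe_add,
    decompose_map_of_degree hd, ← decompose_map_of_degree hh,
    show i - 2 * (s : ℤ) + (2 * s + 1) = i + 1 by ring]

/-- The forms `x_{p+2i}` extracted from an element `z` of the complex: the components of `z` in
the degrees `p + 2i` with `s ∣ i`, and `0` for the other `i`. -/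
noncomputable def strand (A : ℤ → Submodule R M) [DirectSum.Decomposition A] (s : ℕ) (p : ℤ)
    (z : M) (i : ℕ) : M :=
  if s ∣ i then DirectSum.decompose A z (p + 2 * i) else 0

variable {p : ℤ} {z : M}

lemma strand_of_dvd {i : ℕ} (hi : s ∣ i) :
    strand A s p z i = DirectSum.decompose A z (p + 2 * i) :=
  if_pos hi

lemma strand_of_not_dvd {i : ℕ} (hi : ¬ s ∣ i) : strand A s p z i = 0 :=
  if_neg hi

lemma strand_zero : strand A s p z 0 = DirectSum.decompose A z p := by
  rw [strand_of_dvd (dvd_zero s), Nat.cast_zero, mul_zero, add_zero]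

lemma strand_mem (i : ℕ) : strand A s p z i ∈ A (p + 2 * i) := by
  by_cases hi : s ∣ i
  · exact strand_of_dvd (A := A) hi ▸ SetLike.coe_mem _
  · exact strand_of_not_dvd (A := A) hi ▸ zero_mem _

end Strand

section Perturbation

variable {W : Type} [Ring W] [Algebra ℝ W] {A : ℤ → Submodule ℝ W} {d h : W →ₗ[ℝ] W} {s : ℕ}

lemma add_apply_mem_parPart (hd : ∀ i, ∀ w ∈ A i, d w ∈ A (i + 1))
    (hh : ∀ i, ∀ w ∈ A i, h w ∈ A (i + (2 * (s : ℤ) + 1))) (m : ℤ) :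
    ∀ w ∈ ParPart A m, (d + h) w ∈ ParPart A (m + 1) := fun _ hw =>
  add_mem (map_mem_parPart_of_odd odd_one hd hw) (map_mem_parPart_of_odd ⟨s, rfl⟩ hh hw)

section Truncation

variable {xs : ℕ → W} {p q : ℤ} {t : ℕ}

lemma sum_range_mem_zcyc (hh : ∀ i, ∀ w ∈ A i, h w ∈ A (i + (2 * (s : ℤ) + 1)))
    (hq : q % 2 = 0) (hxA : ∀ i : ℕ, xs i ∈ A (p + 2 * i))
    (hy : ∀ j < t + 1, totalComponent d h s xs j = 0) :
    ∑ i ∈ Finset.range (t + 1), xs i ∈ Zcyc A (d + h) (2 * t + 3) p q := by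
  refine ⟨⟨sum_mem fun i _ => mem_kfil_of_mem (by omega) (hxA i),
    sum_mem fun i _ => mem_parPart_of_mem (by omega) (hxA i)⟩, ?_⟩
  rw [SetLike.mem_coe, Submodule.mem_comap, add_apply_sum_range_eq_sum_Ico hy]
  refine sum_mem fun i hi => mem_kfil_of_mem ?_ (hh _ _ (hxA i))
  rw [Finset.mem_Ico] at hi
  push_cast
  omega

lemma add_apply_sum_range_mem_kfil_of_not_dvd
    (hh : ∀ i, ∀ w ∈ A i, h w ∈ A (i + (2 * (s : ℤ) + 1)))
    (hxA : ∀ i : ℕ, xs i ∈ A (p + 2 * i)) (hy : ∀ j < t + 1, totalComponent d h s xs j = 0)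
    (hxs : ∀ i, ¬ s ∣ i → xs i = 0) (hst : ¬ s ∣ t + 1) :
    (d + h) (∑ i ∈ Finset.range (t + 1), xs i) ∈ Kfil A (p + 2 * t + 3 + 1) := by
  rw [add_apply_sum_range_eq_sum_Ico hy]
  refine sum_mem fun i hi => ?_
  rw [Finset.mem_Ico] at hi
  by_cases hsi : s ∣ i
  · have hne : t + 1 ≠ i + s := fun heq => hst (heq ▸ dvd_add hsi dvd_rfl)
    exact mem_kfil_of_mem (by omega) (hh _ _ (hxA i))
  · simp [hxs i hsi]

end Truncation

variable [DirectSum.Decomposition A]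

lemma totalComponent_strand_eq_zero {z : W} {p : ℤ} (hd : ∀ i, ∀ w ∈ A i, d w ∈ A (i + 1))
    (hh : ∀ i, ∀ w ∈ A i, h w ∈ A (i + (2 * (s : ℤ) + 1))) {r : ℤ} (hz : z ∈ Kfil A p)
    (hDz : (d + h) z ∈ Kfil A (p + r)) {j : ℕ} (hj : 2 * j + 1 < r) :
    totalComponent d h s (strand A s p z) j = 0 := by
  have hcomp : d (DirectSum.decompose A z (p + 2 * j)) +
      h (DirectSum.decompose A z (p + 2 * j - 2 * s)) = 0 :=
    (decompose_add_apply hd hh z _).symm.trans <| decompose_eq_zero_of_mem_kfil (by omega) hDz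
  rcases lt_or_ge j s with hjs | hsj
  · rw [totalComponent_of_lt hjs]
    by_cases hdvd : s ∣ j
    · rwa [decompose_eq_zero_of_mem_kfil (i := p + 2 * j - 2 * s) (by omega) hz, map_zero, add_zero,
        ← strand_of_dvd hdvd] at hcomp
    · rw [strand_of_not_dvd hdvd, map_zero]
  · rw [totalComponent_of_le hsj]
    by_cases hdvd : s ∣ j
    · rwa [← strand_of_dvd hdvd,
        show p + 2 * (j : ℤ) - 2 * s = p + 2 * ((j - s : ℕ) : ℤ) by push_cast [hsj]; ring,
        ← strand_of_dvd (Nat.dvd_sub hdvd dvd_rfl)] at hcomp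
    · rw [strand_of_not_dvd hdvd, strand_of_not_dvd (mt (Nat.dvd_sub_iff_left hsj dvd_rfl).1 hdvd),
        map_zero, map_zero, add_zero]

end Perturbation

section TwistedDifferential

variable {K W : Type*} [Field K] [Ring W] [Algebra K W] {A : ℤ → Submodule K W} {H : W} {k : ℤ}

lemma mul_self_eq_zero_of_mem_of_odd [CharZero K]
    (hgcomm : ∀ (i j : ℤ) (x y : W), x ∈ A i → y ∈ A j →
      x * y = ((-1 : K) ^ (i * j)) • (y * x))
    (hk : Odd k) (hH : H ∈ A k) : H * H = 0 := by
  have hneg : H * H = -(H * H) := by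
    simpa only [(hk.mul hk).neg_one_zpow, neg_one_smul] using hgcomm k k H H hH hH
  have : IsAddTorsionFree W := .of_isTorsionFree K W
  exact self_eq_neg.1 hneg

lemma add_mulLeft_apply_apply_eq_zero {d : W →ₗ[K] W} (hd2 : ∀ x, d (d x) = 0)
    (hleib : ∀ (i : ℤ) (x y : W), x ∈ A i →
      d (x * y) = d x * y + ((-1 : K) ^ i) • (x * d y))
    (hk : Odd k) (hH : H ∈ A k) (hdH : d H = 0) (hHH : H * H = 0) (w : W) :
    (d + LinearMap.mulLeft K H) ((d + LinearMap.mulLeft K H) w) = 0 := by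
  have hanti : d (H * w) = -(H * d w) := by
    rw [hleib k H w hH, hdH, zero_mul, zero_add, hk.neg_one_zpow, neg_one_smul]
  simp [hd2, hanti, mul_add, ← mul_assoc, hHH]

end TwistedDifferential

theorem cup_product_differentials_single_twist_general {W : Type} [Ring W] [Algebra ℝ W]
    (A : ℤ → Submodule ℝ W) [DirectSum.Decomposition A] (d h : W →ₗ[ℝ] W) (s : ℕ)
    (hd : ∀ i, ∀ w ∈ A i, d w ∈ A (i + 1))
    (hh : ∀ i, ∀ w ∈ A i, h w ∈ A (i + (2 * (s : ℤ) + 1)))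
    (hD2 : ∀ w, (d + h) ((d + h) w) = 0)
    (t : ℕ) (p q : ℤ) (hq : q % 2 = 0) (x : W) (hxp : x ∈ A p)
    (hsurv : ∃ z ∈ Zcyc A (d + h) (2 * t + 3) p q, z - x ∈ Kfil A (p + 1)) :
    ∃ xs : ℕ → W, xs 0 = x ∧
      (∀ i : ℕ, 1 ≤ i → i ≤ t → xs i ∈ A (p + 2 * i)) ∧
      (∀ i : ℕ, 1 ≤ i → i ≤ t → ¬ s ∣ i → xs i = 0) ∧
      (∀ j : ℕ, 1 ≤ j → j ≤ t → s ≤ j → d (xs j) + h (xs (j - s)) = 0) ∧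
      (∀ j : ℕ, 1 ≤ j → j ≤ t → j < s → d (xs j) = 0) ∧
      ∃ hz : x + ∑ i ∈ Finset.Icc 1 t, xs i ∈ Zcyc A (d + h) (2 * t + 3) p q,
        (t + 1 = s →
          ∃ hw : h x ∈ Zcyc A (d + h) (2 * t + 3) (p + 2 * t + 3) (q - 2 * t - 2),
            dpage A (d + h) (2 * t + 3) p q (p + 2 * t + 3) (q - 2 * t - 2)
                (by push_cast; ring) (by push_cast; ring)
                (pageCls A (d + h) (2 * t + 3) p q (x + ∑ i ∈ Finset.Icc 1 t, xs i) hz)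
              = pageCls A (d + h) (2 * t + 3) (p + 2 * t + 3) (q - 2 * t - 2)
                  (h x) hw) ∧
        (∀ l : ℕ, 2 ≤ l → t + 1 = l * s →
          ∃ hw : h (xs ((l - 1) * s))
              ∈ Zcyc A (d + h) (2 * t + 3) (p + 2 * t + 3) (q - 2 * t - 2),
            dpage A (d + h) (2 * t + 3) p q (p + 2 * t + 3) (q - 2 * t - 2)
                (by push_cast; ring) (by push_cast; ring)
                (pageCls A (d + h) (2 * t + 3) p q (x + ∑ i ∈ Finset.Icc 1 t, xs i) hz)
              = pageCls A (d + h) (2 * t + 3) (p + 2 * t + 3) (q - 2 * t - 2)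
                  (h (xs ((l - 1) * s))) hw) ∧
        ((∀ l : ℕ, 1 ≤ l → t + 1 ≠ l * s) →
          dpage A (d + h) (2 * t + 3) p q (p + 2 * t + 3) (q - 2 * t - 2)
              (by push_cast; ring) (by push_cast; ring)
              (pageCls A (d + h) (2 * t + 3) p q (x + ∑ i ∈ Finset.Icc 1 t, xs i) hz) = 0) := by
  obtain ⟨z, hz, hzx⟩ := hsurv
  have hpar := add_apply_mem_parPart hd hh
  have hx : strand A s p z 0 = x := strand_zero.trans (decompose_eq_of_sub_mem_kfil hxp hzx)
  have hxs : ∀ i, ¬ s ∣ i → strand A s p z i = 0 := fun _ => strand_of_not_dvd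
  have hy : ∀ j < t + 1, totalComponent d h s (strand A s p z) j = 0 := fun j hj =>
    totalComponent_strand_eq_zero hd hh hz.1.1 hz.2 (by push_cast; omega)
  have hsum : x + ∑ i ∈ Finset.Icc 1 t, strand A s p z i =
      ∑ i ∈ Finset.range (t + 1), strand A s p z i := by
    rw [Finset.sum_range_eq_add_Ico _ t.succ_pos, hx, Nat.succ_eq_add_one,
      Finset.Ico_add_one_right_eq_Icc]
  have hzc : x + ∑ i ∈ Finset.Icc 1 t, strand A s p z i ∈ Zcyc A (d + h) (2 * t + 3) p q :=
    hsum ▸ sum_range_mem_zcyc hh hq strand_mem hy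
  have hDl : ∀ l, t + 1 = l * s → (d + h) (x + ∑ i ∈ Finset.Icc 1 t, strand A s p z i) =
      h (strand A s p z ((l - 1) * s)) := fun l hl =>
    hsum ▸ add_apply_sum_range_eq_of_eq_mul hy hxs hl
  refine ⟨strand A s p z, hx, fun i _ _ => strand_mem i, fun i _ _ => hxs i,
    fun j _ hj hsj => totalComponent_of_le (d := d) (h := h) hsj ▸ hy j (Nat.lt_succ_of_le hj),
    fun j _ hj hjs => totalComponent_of_lt (d := d) (h := h) hjs ▸ hy j (Nat.lt_succ_of_le hj), hzc,
    fun hts => ?_, fun l _ hl => ?_, fun hno => ?_⟩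
  · exact exists_dpage_pageCls_eq hD2 hpar _ _ hzc (by simpa [hx] using hDl 1 (by simpa using hts))
  · exact exists_dpage_pageCls_eq hD2 hpar _ _ hzc (hDl l hl)
  · have hst : ¬ s ∣ t + 1 := fun ⟨l, hl⟩ => hno l (Nat.pos_of_ne_zero (by rintro rfl; omega))
      (hl.trans (mul_comm s l))
    exact dpage_pageCls_eq_zero hD2 hpar _ _ hzc
      (hsum ▸ add_apply_sum_range_mem_kfil_of_not_dvd hh strand_mem hy hxs hst)

/-- Theorem 4.2 of the paper. For `H = H_{2s+1}` only (`s ≥ 1`) and a class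
`[x_p]_{2t+3} ∈ E_{2t+3}^{p,q}` (`t ≥ 1`) represented by the closed `p`-form `x`, there exist
forms `xs i ∈ Ω^{p+2i}(M)` (`1 ≤ i ≤ t`), vanishing except when `s ∣ i` (this encodes
`x_{p+2(i-1)s+2j} = 0` and `x_{p+2[t/s]s+2k} = 0`), such that the homogeneous components
`y_{p+2u+1}` of `D z` vanish for `0 ≤ u ≤ t` where `z = x + ∑_{i=1}^t xs i`, and
`d_{2t+3}[x_p]_{2t+3}` equals `[H_{2s+1} ∧ x_p]_{2s+1}` if `t = s - 1`, equals
`[H_{2s+1} ∧ x_{p+2(l-1)s}]_{2t+3}` if `t = l s - 1` with `l ≥ 2`, and equals `0`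
otherwise. -/
theorem cup_product_differentials_single_twist {W : Type} [Ring W] [Algebra ℝ W]
    (n : ℕ) (A : ℤ → Submodule ℝ W) [DirectSum.Decomposition A]
    (hbound : ∀ i : ℤ, i < 0 ∨ (n : ℤ) < i → A i = ⊥)
    (hmul : ∀ (i j : ℤ) (x y : W), x ∈ A i → y ∈ A j → x * y ∈ A (i + j))
    (d : W →ₗ[ℝ] W)
    (hdmem : ∀ i : ℤ, ∀ x ∈ A i, d x ∈ A (i + 1))
    (hd2 : ∀ x : W, d (d x) = 0)
    (hleib : ∀ (i : ℤ) (x y : W), x ∈ A i →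
      d (x * y) = d x * y + ((-1 : ℝ) ^ i) • (x * d y))
    (hgcomm : ∀ (i j : ℤ) (x y : W), x ∈ A i → y ∈ A j →
      x * y = ((-1 : ℝ) ^ (i * j)) • (y * x))
    (s : ℕ) (hs : 1 ≤ s) (Hs : W)
    (hHsmem : Hs ∈ A (2 * (s : ℤ) + 1)) (hHscl : d Hs = 0)
    (D : W →ₗ[ℝ] W) (hD : ∀ w : W, D w = d w + Hs * w)
    (t : ℕ) (ht : 1 ≤ t) (p q : ℤ) (hq : q % 2 = 0)
    (x : W) (hxp : x ∈ A p) (hxd : d x = 0)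
    (hsurv : ∃ z ∈ Zcyc A D (2 * t + 3) p q, z - x ∈ Kfil A (p + 1)) :
    ∃ xs : ℕ → W, xs 0 = x ∧
      (∀ i : ℕ, 1 ≤ i → i ≤ t → xs i ∈ A (p + 2 * i)) ∧
      (∀ i : ℕ, 1 ≤ i → i ≤ t → ¬ s ∣ i → xs i = 0) ∧
      (∀ j : ℕ, 1 ≤ j → j ≤ t → s ≤ j → d (xs j) + Hs * xs (j - s) = 0) ∧
      (∀ j : ℕ, 1 ≤ j → j ≤ t → j < s → d (xs j) = 0) ∧
      ∃ hz : x + ∑ i ∈ Finset.Icc 1 t, xs i ∈ Zcyc A D (2 * t + 3) p q,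
        (t + 1 = s →
          ∃ hw : Hs * x ∈ Zcyc A D (2 * t + 3) (p + 2 * t + 3) (q - 2 * t - 2),
            dpage A D (2 * t + 3) p q (p + 2 * t + 3) (q - 2 * t - 2)
                (by push_cast; ring) (by push_cast; ring)
                (pageCls A D (2 * t + 3) p q (x + ∑ i ∈ Finset.Icc 1 t, xs i) hz)
              = pageCls A D (2 * t + 3) (p + 2 * t + 3) (q - 2 * t - 2) (Hs * x) hw) ∧
        (∀ l : ℕ, 2 ≤ l → t + 1 = l * s →
          ∃ hw : Hs * xs ((l - 1) * s)
              ∈ Zcyc A D (2 * t + 3) (p + 2 * t + 3) (q - 2 * t - 2),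
            dpage A D (2 * t + 3) p q (p + 2 * t + 3) (q - 2 * t - 2)
                (by push_cast; ring) (by push_cast; ring)
                (pageCls A D (2 * t + 3) p q (x + ∑ i ∈ Finset.Icc 1 t, xs i) hz)
              = pageCls A D (2 * t + 3) (p + 2 * t + 3) (q - 2 * t - 2)
                  (Hs * xs ((l - 1) * s)) hw) ∧
        ((∀ l : ℕ, 1 ≤ l → t + 1 ≠ l * s) →
          dpage A D (2 * t + 3) p q (p + 2 * t + 3) (q - 2 * t - 2)
              (by push_cast; ring) (by push_cast; ring)
              (pageCls A D (2 * t + 3) p q (x + ∑ i ∈ Finset.Icc 1 t, xs i) hz) = 0) := by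
  obtain rfl : D = d + LinearMap.mulLeft ℝ Hs := LinearMap.ext hD
  exact cup_product_differentials_single_twist_general A d (LinearMap.mulLeft ℝ Hs) s hdmem
    (fun i w hw => add_comm (2 * (s : ℤ) + 1) i ▸ hmul _ _ _ _ hHsmem hw)
    (add_mulLeft_apply_apply_eq_zero hd2 hleib ⟨s, rfl⟩ hHsmem hHscl
      (mul_self_eq_zero_of_mem_of_odd hgcomm ⟨s, rfl⟩ hHsmem)) t p q hq x hxp hsurv
end
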